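/- arXiv:2306.17776 — 2 statements merged into one kernel-verified Lean document; each statement's English description precedes it below -/
import Mathlib

section
/- Let a > 0, b > 0 and α ∈ ℝ, and let X have the GIG(a, b, α) density. Then z ↦ (log z) g(z; a, b, α) is integrable on (0, ∞) and E(log X) = ∫_0^∞ (log z) g(z; a, b, α) dz = [(d/dν) log K_ν(√(a b))]|_{ν=α} + (1/2) log(b/a), where (d/dν) K_ν(x) = (1/2)∫_0^∞ u^(ν−1) (log u) exp(−x(u + u⁻¹)/2) du denotes the derivative of the Bessel function with respect to its order. -/
/-!
Write `w ν u = u ^ (ν - 1) * exp (-x (u + u⁻¹) / 2)` with `x = √(a b) > 0`. Since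
`exp (-x u⁻¹ / 2) ≤ n! (2 u / x) ^ n` for every `n`, the kernel `w ν` is dominated by a Gamma
integrand, so it is integrable on `(0, ∞)` for every real order `ν` (`besselKernel_integrable`).

For `|ν' - ν| < 1` one has `u ^ (ν' - 1) ≤ u ^ ν + u ^ (ν - 2)`, and `|log u| ≤ u + u⁻¹`, so the
`ν'`-derivative `log u * w ν' u` is dominated by `w (ν + 2) u + 2 w ν u + w (ν - 2) u`. Dominated
differentiation under the integral sign gives `∂K/∂ν` (`besselKernel_hasDerivAt`).

Finally, with `s = √(a / b)` the substitution `u = s z` turns `a z + b z⁻¹` into `x (u + u⁻¹)`, and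
`log z * g(z)` becomes `s / (2 K) * (log u - log s) * w α u`. Integrating gives `K' / K - log s`,
where `K' / K` is the logarithmic derivative and `-log s = (1 / 2) log (b / a)`.
-/

open MeasureTheory Real Set Finset

/-- Second-kind modified Bessel function:
`K_α(x) = (1/2) ∫_0^∞ u^(α−1) exp(−x(u+u⁻¹)/2) du`. -/
noncomputable def besselK (α x : ℝ) : ℝ :=
  (1/2) * ∫ u in Set.Ioi (0:ℝ), u ^ (α - 1) * Real.exp (-(x * (u + u⁻¹)) / 2)

/-- Generalized inverse-Gaussian `GIG(a,b,α)` density. -/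
noncomputable def gigPDF (a b α z : ℝ) : ℝ :=
  ((a / b) ^ (α / 2) / (2 * besselK α (Real.sqrt (a * b)))) *
    z ^ (α - 1) * Real.exp (-(a * z + b * z⁻¹) / 2)

/-- The integrand of `besselK`, up to the factor `1 / 2`. -/
noncomputable def besselKernel (x ν u : ℝ) : ℝ :=
  u ^ (ν - 1) * Real.exp (-(x * (u + u⁻¹)) / 2)

lemma besselKernel_measurable (x ν : ℝ) : Measurable (besselKernel x ν) := by
  unfold besselKernel
  fun_prop

lemma besselKernel_pos (x ν : ℝ) {u : ℝ} (hu : 0 < u) : 0 < besselKernel x ν u := by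
  unfold besselKernel
  positivity

lemma besselKernel_integrable {x : ℝ} (hx : 0 < x) (ν : ℝ) :
    IntegrableOn (besselKernel x ν) (Set.Ioi 0) := by
  -- `n` raises the exponent at `0` above `-1`, which makes the Gamma integrand integrable.
  obtain ⟨n, hn⟩ := exists_nat_gt (-ν)
  have hG : IntegrableOn (fun u : ℝ => u ^ (ν - 1 + n) * Real.exp (-(x / 2) * u ^ (1 : ℝ)))
      (Set.Ioi 0) :=
    integrableOn_rpow_mul_exp_neg_mul_rpow (by linarith) one_pos (by positivity)
  refine Integrable.mono' (hG.const_mul ((n.factorial : ℝ) * (2 / x) ^ n))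
    (besselKernel_measurable x ν).aestronglyMeasurable ?_
  refine (ae_restrict_iff' measurableSet_Ioi).2 (Filter.Eventually.of_forall fun u hu => ?_)
  have hu : 0 < u := hu
  rw [Real.norm_eq_abs, abs_of_pos (besselKernel_pos x ν hu), besselKernel, Real.rpow_one,
    Real.rpow_add hu, Real.rpow_natCast]
  have h1 : Real.exp (-(x * (u + u⁻¹)) / 2)
      = Real.exp (-(x / 2) * u) * Real.exp (-(x / 2 * u⁻¹)) := by
    rw [← Real.exp_add]; congr 1; ring
  have h2 : Real.exp (-(x / 2 * u⁻¹)) ≤ (n.factorial : ℝ) * (2 / x) ^ n * u ^ n := by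
    have hy : 0 < x / 2 * u⁻¹ := by positivity
    have h := Real.pow_div_factorial_le_exp _ hy.le n
    have hf : (0 : ℝ) < n.factorial := by positivity
    have he : (n.factorial : ℝ) * (2 / x) ^ n * u ^ n
        = ((x / 2 * u⁻¹) ^ n / n.factorial)⁻¹ := by
      rw [inv_div, div_eq_mul_inv (n.factorial : ℝ), ← inv_pow, mul_assoc, ← mul_pow]
      congr 2
      field_simp
    rw [he, Real.exp_neg]
    exact inv_anti₀ (by positivity) h
  rw [h1]
  calc u ^ (ν - 1) * (Real.exp (-(x / 2) * u) * Real.exp (-(x / 2 * u⁻¹)))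
      ≤ u ^ (ν - 1) * (Real.exp (-(x / 2) * u)
          * ((n.factorial : ℝ) * (2 / x) ^ n * u ^ n)) := by gcongr
    _ = _ := by ring

lemma abs_log_le_add_inv {u : ℝ} (hu : 0 < u) : |Real.log u| ≤ u + u⁻¹ := by
  have h1 := Real.log_le_sub_one_of_pos hu
  have h2 := Real.log_le_sub_one_of_pos (inv_pos.2 hu)
  have h3 := inv_pos.2 hu
  rw [Real.log_inv] at h2
  rw [abs_le]
  constructor <;> linarith

lemma rpow_le_rpow_add_rpow {u p q r : ℝ} (hu : 0 < u) (hqp : q ≤ p) (hpr : p ≤ r) :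
    u ^ p ≤ u ^ r + u ^ q := by
  have hr := Real.rpow_pos_of_pos hu r
  have hq := Real.rpow_pos_of_pos hu q
  rcases le_total 1 u with h | h
  · linarith [Real.rpow_le_rpow_of_exponent_le h hpr]
  · linarith [Real.rpow_le_rpow_of_exponent_ge hu h hqp]

/-- A bound on the order derivative of the kernel that is uniform for orders within `1` of `ν`. -/
lemma abs_log_mul_besselKernel_le (x : ℝ) {ν ν' u : ℝ} (hu : 0 < u) (h : |ν' - ν| < 1) :
    |Real.log u * besselKernel x ν' u| ≤
      besselKernel x (ν + 2) u + 2 * besselKernel x ν u + besselKernel x (ν - 2) u := by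
  obtain ⟨h1, h2⟩ := abs_lt.1 h
  rw [abs_mul, abs_of_pos (besselKernel_pos x ν' hu)]
  unfold besselKernel
  set e := Real.exp (-(x * (u + u⁻¹)) / 2)
  have hp : u ^ (ν' - 1) ≤ u ^ ν + u ^ (ν - 2) :=
    rpow_le_rpow_add_rpow hu (by linarith) (by linarith)
  have e1 : u ^ (ν + 2 - 1) = u ^ ν * u := by
    rw [show ν + 2 - 1 = ν + 1 by ring, Real.rpow_add_one hu.ne']
  have e2 : u ^ (ν - 1) = u ^ ν * u⁻¹ := by
    rw [Real.rpow_sub_one hu.ne', div_eq_mul_inv]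
  have e3 : u ^ (ν - 1) = u ^ (ν - 2) * u := by
    rw [← Real.rpow_add_one hu.ne']; congr 1; ring
  have e4 : u ^ (ν - 2 - 1) = u ^ (ν - 2) * u⁻¹ := by
    rw [Real.rpow_sub_one hu.ne', div_eq_mul_inv]
  calc |Real.log u| * (u ^ (ν' - 1) * e)
      ≤ (u + u⁻¹) * ((u ^ ν + u ^ (ν - 2)) * e) := by
        gcongr
        exact abs_log_le_add_inv hu
    _ = (u ^ ν * u) * e + (u ^ ν * u⁻¹ + u ^ (ν - 2) * u) * e + (u ^ (ν - 2) * u⁻¹) * e := by ring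
    _ = _ := by rw [e1, ← e2, ← e3, e4]; ring

lemma besselKernel_hasDerivAt {x : ℝ} (hx : 0 < x) (ν : ℝ) :
    IntegrableOn (fun u => Real.log u * besselKernel x ν u) (Set.Ioi 0) ∧
    HasDerivAt (fun ν' => ∫ u in Set.Ioi (0:ℝ), besselKernel x ν' u)
      (∫ u in Set.Ioi (0:ℝ), Real.log u * besselKernel x ν u) ν := by
  refine hasDerivAt_integral_of_dominated_loc_of_deriv_le
    (F' := fun ν' u => Real.log u * besselKernel x ν' u)
    (bound := fun u =>
      besselKernel x (ν + 2) u + 2 * besselKernel x ν u + besselKernel x (ν - 2) u)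
    (Metric.ball_mem_nhds ν one_pos)
    (Filter.Eventually.of_forall fun ν' => (besselKernel_measurable x ν').aestronglyMeasurable)
    (besselKernel_integrable hx ν)
    (Real.measurable_log.mul (besselKernel_measurable x ν)).aestronglyMeasurable
    ?_ ?_ ?_
  · refine (ae_restrict_iff' measurableSet_Ioi).2 (Filter.Eventually.of_forall fun u hu ν' hν' => ?_)
    rw [Metric.mem_ball, Real.dist_eq] at hν'
    exact abs_log_mul_besselKernel_le x hu hν'
  · exact ((besselKernel_integrable hx _).add ((besselKernel_integrable hx _).const_mul 2)).add
      (besselKernel_integrable hx _)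
  · refine (ae_restrict_iff' measurableSet_Ioi).2 (Filter.Eventually.of_forall fun u hu ν' _ => ?_)
    have h := (((hasDerivAt_id ν').sub_const 1).const_rpow (a := u) hu).mul_const
      (Real.exp (-(x * (u + u⁻¹)) / 2))
    refine h.congr_deriv ?_
    simp only [besselKernel, id]
    ring

lemma besselK_pos {x : ℝ} (hx : 0 < x) (ν : ℝ) : 0 < besselK ν x := by
  have h : 0 < ∫ u in Set.Ioi (0:ℝ), besselKernel x ν u := by
    rw [setIntegral_pos_iff_support_of_nonneg_ae
      ((ae_restrict_iff' measurableSet_Ioi).2 (Filter.Eventually.of_forall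
        fun u hu => (besselKernel_pos x ν hu).le)) (besselKernel_integrable hx ν)]
    have : Function.support (besselKernel x ν) ∩ Set.Ioi 0 = Set.Ioi 0 :=
      Set.inter_eq_right.2 fun u hu => (besselKernel_pos x ν hu).ne'
    rw [this]
    simp
  exact mul_pos (by norm_num) h

/-- Under `u = √(a / b) z`, the GIG density is the Bessel kernel normalised to total mass one. -/
lemma gigPDF_eq_besselKernel {a b : ℝ} (ha : 0 < a) (hb : 0 < b) (α : ℝ) {z : ℝ} (hz : 0 < z) :
    gigPDF a b α z = √(a / b) / (2 * besselK α √(a * b)) *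
      besselKernel √(a * b) α (√(a / b) * z) := by
  have hs : 0 < √(a / b) := Real.sqrt_pos.2 (by positivity)
  have h1 : √(a * b) * √(a / b) = a := by
    rw [← Real.sqrt_mul (by positivity), show a * b * (a / b) = a ^ 2 by field_simp,
      Real.sqrt_sq ha.le]
  have h2 : √(a * b) * (√(a / b))⁻¹ = b := by
    rw [← Real.sqrt_inv, ← Real.sqrt_mul (by positivity),
      show a * b * (a / b)⁻¹ = b ^ 2 by field_simp, Real.sqrt_sq hb.le]
  have h3 : √(a * b) * (√(a / b) * z + (√(a / b) * z)⁻¹) = a * z + b * z⁻¹ := by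
    rw [mul_inv, mul_add, ← mul_assoc, ← mul_assoc, h1, h2]
  have h4 : (a / b) ^ (α / 2) = √(a / b) * √(a / b) ^ (α - 1) := by
    rw [Real.rpow_sub_one hs.ne', mul_div_cancel₀ _ hs.ne', Real.sqrt_eq_rpow,
      ← Real.rpow_mul (by positivity)]
    congr 1; ring
  rw [gigPDF, besselKernel, h3, Real.mul_rpow hs.le hz.le, h4]
  ring

/-- for `X ~ GIG(a,b,α)`, `z ↦ (log z) g(z;a,b,α)` is integrable on `(0,∞)`
and `E(log X) = [(d/dν) log K_ν(√(ab))]|_{ν=α} + (1/2) log(b/a)`, where the derivative of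
the Bessel function with respect to its order is
`(d/dν) K_ν(x) = (1/2)∫_0^∞ u^(ν−1) (log u) exp(−x(u+u⁻¹)/2) du`. -/
theorem gig_log_moment (a b α : ℝ) (ha : 0 < a) (hb : 0 < b) :
    MeasureTheory.IntegrableOn (fun z : ℝ => Real.log z * gigPDF a b α z) (Set.Ioi 0) ∧
    (∀ ν : ℝ, HasDerivAt (fun ν' : ℝ => besselK ν' (Real.sqrt (a * b)))
      ((1/2) * ∫ u in Set.Ioi (0:ℝ),
        u ^ (ν - 1) * Real.log u * Real.exp (-(Real.sqrt (a * b) * (u + u⁻¹)) / 2)) ν) ∧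
    (∫ z in Set.Ioi (0:ℝ), Real.log z * gigPDF a b α z)
      = deriv (fun ν : ℝ => Real.log (besselK ν (Real.sqrt (a * b)))) α
        + (1/2) * Real.log (b / a) := by
  have hx : 0 < √(a * b) := Real.sqrt_pos.2 (by positivity)
  have hs : 0 < √(a / b) := Real.sqrt_pos.2 (by positivity)
  have hK := besselK_pos hx α
  have hD : ∀ ν : ℝ, HasDerivAt (fun ν' : ℝ => besselK ν' √(a * b))
      ((1/2) * ∫ u in Set.Ioi (0:ℝ), Real.log u * besselKernel √(a * b) ν u) ν := fun ν =>
    (besselKernel_hasDerivAt hx ν).2.const_mul (1/2)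
  have hI := (besselKernel_hasDerivAt hx α).1
  have hI0 := besselKernel_integrable hx α
  set x := √(a * b)
  set s := √(a / b) with hs_def
  set K := besselK α x with hK_def
  -- The integrand in the variable `u = s * z`.
  let G : ℝ → ℝ := fun u =>
    s / (2 * K) * (Real.log u * besselKernel x α u - Real.log s * besselKernel x α u)
  have hG : Set.EqOn (fun z => Real.log z * gigPDF a b α z) (fun z => G (s * z)) (Set.Ioi 0) := by
    intro z hz
    have hz : 0 < z := hz
    simp only [G]
    rw [gigPDF_eq_besselKernel ha hb α hz, Real.log_mul hs.ne' hz.ne']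
    ring
  have hGint : IntegrableOn G (Set.Ioi 0) := (hI.sub (hI0.const_mul _)).const_mul _
  refine ⟨?_, ?_, ?_⟩
  · rw [integrableOn_congr_fun hG measurableSet_Ioi, integrableOn_Ioi_comp_mul_left_iff G 0 hs,
      mul_zero]
    exact hGint
  · intro ν
    refine (hD ν).congr_deriv ?_
    congr 2
    ext u
    rw [besselKernel]
    ring
  · have hlog : Real.log (b / a) = -(2 * Real.log s) := by
      rw [hs_def, Real.log_sqrt (by positivity), ← inv_div a b, Real.log_inv]
      ring
    have hK2 : ∫ u in Set.Ioi (0:ℝ), besselKernel x α u = 2 * K := by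
      rw [hK_def, besselK]
      simp only [besselKernel]
      ring
    rw [((hD α).log hK.ne').deriv, setIntegral_congr_fun measurableSet_Ioi hG,
      integral_comp_mul_left_Ioi G 0 hs, mul_zero, hlog]
    simp only [G]
    rw [integral_const_mul, integral_sub hI (hI0.const_mul _), integral_const_mul, hK2,
      smul_eq_mul, ← hK_def]
    field_simp
    ring
end

section
/- Let Y = (Y_1, …, Y_p) follow the MPGIG_p(λ, φ, α) distribution with λ_1, …, λ_p > 0, φ > 0, α ∈ ℝ, and write R_{α,k}(φ) = K_{k+α}(φ)/K_α(φ) and R_α(φ) = R_{α,1}(φ). Then for each i the second moment of Y_i is finite and the variance equals Var(Y_i) = λ_i R_α(φ) + λ_i² { R_{α,2}(φ) − R_α(φ)² }. -/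
/-!
The `MPGIG` law is a mixed Poisson law: conditionally on a generalized inverse-Gaussian variable
`Z`, the coordinates are independent Poisson variables with means `λ_j Z`. Concretely, the
substitution `u = √(a/b) z` in the integral defining `K_ν` gives
`∫_0^∞ z^(ν-1) exp(-(a z + b/z)/2) dz = 2 K_ν(√(a b)) (b/a)^(ν/2)` (`integral_gigKernel`), so with
`a = 2Λ + φ`, `b = φ`, `ν = s(y) + α` the mass function is an integral over `z` of Poisson weights
against the kernel `z^(α-1) exp(-φ (z + 1/z)/2)`.

For a weight `w ≥ 0` whose Poisson expectation is `∑ w(n) e^(-x) x^n / n! = m(x)`, summing under the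
integral yields
`∑_y w(y_i) P(y) = (∫ m(λ_i z) z^(α-1) exp(-φ (z + 1/z)/2) dz) / (2 K_α(φ))` (`hasSum_mpgigPMF`).
The weights `n` and `n²` have `m(x) = x` and `m(x) = x + x²`, and each extra power of `z` raises the
index of the Bessel function by one, so `E Y_i = λ_i R_{α,1}` and
`E Y_i² = λ_i R_{α,1} + λ_i² R_{α,2}`.
-/

open MeasureTheory Real Set Finset

/-- The `MPGIG_p(λ, φ, α)` probability mass function. -/
noncomputable def mpgigPMF (p : ℕ) (lam : Fin p → ℝ) (φ α : ℝ) (y : Fin p → ℕ) : ℝ :=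
  (besselK ((∑ i, (y i : ℝ)) + α) (Real.sqrt (φ * (2 * (∑ i, lam i) + φ))) / besselK α φ) *
    (∏ i, lam i ^ (y i) / (Nat.factorial (y i) : ℝ)) *
    (φ / (2 * (∑ i, lam i) + φ)) ^ (((∑ i, (y i : ℝ)) + α) / 2)

/-- The unnormalized generalized inverse-Gaussian density `z^(ν-1) exp(-(a z + b/z)/2)`. -/
noncomputable def gigKernel (ν a b z : ℝ) : ℝ :=
  z ^ (ν - 1) * Real.exp (-(a * z + b * z⁻¹) / 2)

lemma gigKernel_nonneg (ν a b : ℝ) {z : ℝ} (hz : 0 < z) : 0 ≤ gigKernel ν a b z := by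
  unfold gigKernel; positivity

lemma measurable_gigKernel (ν a b : ℝ) : Measurable (gigKernel ν a b) := by
  unfold gigKernel; fun_prop

lemma gigKernel_natCast_add (n : ℕ) (ν a b : ℝ) {z : ℝ} (hz : 0 < z) :
    gigKernel (n + ν) a b z = z ^ n * gigKernel ν a b z := by
  unfold gigKernel
  rw [show (n : ℝ) + ν - 1 = n + (ν - 1) by ring, Real.rpow_add hz, Real.rpow_natCast]
  ring

lemma gigKernel_add_left (ν a b c z : ℝ) :
    gigKernel ν (2 * c + a) b z = Real.exp (-(c * z)) * gigKernel ν a b z := by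
  unfold gigKernel
  rw [mul_left_comm, ← Real.exp_add]
  congr 2
  ring

/-- For every real order `ν` the kernel is integrable: near `0` the factor `exp(-b/(2z))` beats any
power of `z`. -/
lemma integrableOn_gigKernel (ν : ℝ) {a b : ℝ} (ha : 0 < a) (hb : 0 < b) :
    IntegrableOn (gigKernel ν a b) (Set.Ioi 0) := by
  obtain ⟨n, hn⟩ := exists_nat_gt (-ν)
  have h_int : IntegrableOn (fun z : ℝ => ((n.factorial : ℝ) * (2 / b) ^ n) *
      (z ^ (n + ν - 1) * Real.exp (-(a / 2) * z ^ (1 : ℝ)))) (Set.Ioi 0) :=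
    (integrableOn_rpow_mul_exp_neg_mul_rpow (by linarith) one_pos (by positivity)).const_mul _
  refine Integrable.mono' h_int (measurable_gigKernel ν a b).aestronglyMeasurable ?_
  filter_upwards [ae_restrict_mem measurableSet_Ioi] with z hz
  have hz : 0 < z := hz
  rw [Real.norm_of_nonneg (gigKernel_nonneg ν a b hz)]
  -- `t^n / n! ≤ exp t` at `t = b/(2z)`, inverted.
  have h1 : Real.exp (-(b * z⁻¹ / 2)) ≤ (n.factorial : ℝ) * (2 / b) ^ n * z ^ n := by
    have h := Real.pow_div_factorial_le_exp (x := b * z⁻¹ / 2) (by positivity) n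
    rw [Real.exp_neg]
    refine (inv_anti₀ (by positivity) h).trans (le_of_eq ?_)
    rw [inv_div, div_eq_mul_inv, ← inv_pow, mul_assoc, ← mul_pow]
    congr 2
    field_simp
  have h2 : gigKernel ν a b z
      = z ^ (ν - 1) * Real.exp (-(a / 2) * z) * Real.exp (-(b * z⁻¹ / 2)) := by
    unfold gigKernel
    rw [mul_assoc, ← Real.exp_add]
    congr 2
    ring
  have h3 : z ^ (n + ν - 1) = z ^ n * z ^ (ν - 1) := by
    rw [add_sub_assoc, Real.rpow_add hz, Real.rpow_natCast]
  rw [h2, h3, Real.rpow_one]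
  calc _ ≤ z ^ (ν - 1) * Real.exp (-(a / 2) * z) * ((n.factorial : ℝ) * (2 / b) ^ n * z ^ n) := by
        gcongr
    _ = _ := by ring

lemma integral_gigKernel_self (ν x : ℝ) :
    ∫ z in Set.Ioi (0 : ℝ), gigKernel ν x x z = 2 * besselK ν x := by
  simp only [besselK, gigKernel, mul_add]
  ring

/-- The generalized inverse-Gaussian normalizing constant, by the substitution `u = √(a/b) z`. -/
lemma integral_gigKernel (ν : ℝ) {a b : ℝ} (ha : 0 < a) (hb : 0 < b) :
    ∫ z in Set.Ioi (0 : ℝ), gigKernel ν a b z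
      = 2 * (besselK ν (Real.sqrt (b * a)) * (b / a) ^ (ν / 2)) := by
  set r := Real.sqrt (b * a) with hr
  set c := Real.sqrt (a / b) with hc
  have hc0 : 0 < c := Real.sqrt_pos.2 (by positivity)
  have hrc : r * c = a := by
    rw [hr, hc, ← Real.sqrt_mul (by positivity), show b * a * (a / b) = a ^ 2 by field_simp,
      Real.sqrt_sq ha.le]
  have hrc' : r * c⁻¹ = b := by
    have : c ^ 2 = a / b := Real.sq_sqrt (by positivity)
    rw [eq_div_iff hb.ne'] at this
    rw [← div_eq_mul_inv, div_eq_iff hc0.ne']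
    exact mul_right_cancel₀ hc0.ne' (by linear_combination hrc - this)
  have hpt : ∀ z ∈ Set.Ioi (0 : ℝ), gigKernel ν a b z = c ^ (1 - ν) * gigKernel ν r r (c * z) := by
    intro z hz
    have hz : 0 < z := hz
    unfold gigKernel
    rw [Real.mul_rpow hc0.le hz.le, ← hrc', mul_inv, ← mul_assoc, ← mul_assoc,
      ← Real.rpow_add hc0, show (1 - ν) + (ν - 1) = 0 by ring, Real.rpow_zero, one_mul]
    congr 3
    rw [hrc', ← hrc, ← hrc']
    ring
  have hpow : c ^ (1 - ν) * c⁻¹ = (b / a) ^ (ν / 2) := by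
    rw [← Real.rpow_neg_one c, ← Real.rpow_add hc0, hc, Real.sqrt_eq_rpow,
      ← Real.rpow_mul (by positivity), ← inv_div a b, Real.inv_rpow (by positivity),
      ← Real.rpow_neg (by positivity)]
    congr 1
    ring
  rw [setIntegral_congr_fun measurableSet_Ioi hpt, integral_const_mul,
    integral_comp_mul_left_Ioi (gigKernel ν r r) 0 hc0, mul_zero, integral_gigKernel_self,
    smul_eq_mul, ← mul_assoc, hpow]
  ring

/-- The mass function as a mixture over the generalized inverse-Gaussian kernel. -/
lemma mpgigPMF_eq_integral (p : ℕ) (lam : Fin p → ℝ) (hlam : ∀ i, 0 < lam i) (φ α : ℝ)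
    (hφ : 0 < φ) (y : Fin p → ℕ) :
    mpgigPMF p lam φ α y = (∏ i, lam i ^ (y i) / (Nat.factorial (y i) : ℝ)) *
      (∫ z in Set.Ioi (0 : ℝ), gigKernel ((∑ i, (y i : ℝ)) + α) (2 * (∑ i, lam i) + φ) φ z) /
        (2 * besselK α φ) := by
  have hΛ : 0 ≤ ∑ i, lam i := Finset.sum_nonneg fun i _ => (hlam i).le
  rw [integral_gigKernel _ (by positivity) hφ, mpgigPMF]
  ring

/-- A product of finitely many nonnegative series, expanded over multi-indices. -/
lemma hasSum_prod_fin : ∀ (p : ℕ) (f : Fin p → ℕ → ℝ) (s : Fin p → ℝ),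
    (∀ j n, 0 ≤ f j n) → (∀ j, HasSum (f j) (s j)) →
    HasSum (fun y : Fin p → ℕ => ∏ j, f j (y j)) (∏ j, s j)
  | 0, f, s, _, _ => by
      simp
  | p + 1, f, s, h0, h => by
      have ih := hasSum_prod_fin p (fun j => f j.succ) (fun j => s j.succ)
        (fun j n => h0 _ n) (fun j => h _)
      have hs := (h 0).summable.mul_of_nonneg ih.summable (h0 0)
        (fun y => Finset.prod_nonneg fun j _ => h0 _ _)
      have hm := (h 0).mul ih hs
      rw [← (Fin.consEquiv (fun _ : Fin (p + 1) => ℕ)).hasSum_iff, Fin.prod_univ_succ]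
      convert! hm using 1
      ext y
      simp [Fin.consEquiv, Fin.prod_univ_succ]

/-- If the Poisson expectation of the weight `w` is `m`, then the `MPGIG` expectation of `w (y i)` is
the generalized inverse-Gaussian expectation of `m (λ_i z)`. -/
lemma hasSum_mpgigPMF (p : ℕ) (lam : Fin p → ℝ) (hlam : ∀ i, 0 < lam i)
    (φ α : ℝ) (hφ : 0 < φ) (i : Fin p) (w : ℕ → ℝ) (hw : ∀ n, 0 ≤ w n) (m : ℝ → ℝ)
    (hm : ∀ x, HasSum (fun n : ℕ => w n * (x ^ n / (n.factorial : ℝ))) (m x * Real.exp x))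
    (h_int : IntegrableOn (fun z => m (lam i * z) * gigKernel α φ φ z) (Set.Ioi 0)) :
    HasSum (fun y : Fin p → ℕ => w (y i) * mpgigPMF p lam φ α y)
      ((∫ z in Set.Ioi (0 : ℝ), m (lam i * z) * gigKernel α φ φ z) / (2 * besselK α φ)) := by
  have hone : ∀ x : ℝ, HasSum (fun n : ℕ => x ^ n / (n.factorial : ℝ)) (Real.exp x) := fun x => by
    rw [Real.exp_eq_exp_ℝ]; exact NormedSpace.expSeries_div_hasSum_exp x
  set F : (Fin p → ℕ) → ℝ → ℝ := fun y z =>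
    w (y i) * (∏ j, lam j ^ (y j) / (Nat.factorial (y j) : ℝ)) *
      gigKernel ((∑ j, (y j : ℝ)) + α) (2 * (∑ j, lam j) + φ) φ z with hF
  have hF0 : ∀ y, ∀ z ∈ Set.Ioi (0 : ℝ), 0 ≤ F y z := fun y z hz =>
    mul_nonneg (mul_nonneg (hw _) (Finset.prod_nonneg fun j _ => by have := hlam j; positivity))
      (gigKernel_nonneg _ _ _ hz)
  -- For fixed `z` the sum over `y` factors into one-dimensional exponential series.
  have hsum : ∀ z ∈ Set.Ioi (0 : ℝ),
      HasSum (fun y => F y z) (m (lam i * z) * gigKernel α φ φ z) := by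
    intro z hz
    have hz : 0 < z := hz
    have h := (hasSum_prod_fin p
      (fun j n => (if j = i then w n else 1) * ((lam j * z) ^ n / (n.factorial : ℝ)))
      (fun j => (if j = i then m (lam i * z) else 1) * Real.exp (lam j * z))
      (fun j n => by
        have := hlam j
        have := hw n
        split_ifs <;> positivity)
      (fun j => by
        by_cases hj : j = i
        · subst hj; simpa using hm (lam j * z)
        · simpa [hj] using hone (lam j * z))).mul_right
          (gigKernel α (2 * (∑ j, lam j) + φ) φ z)
    convert! h using 1
    · ext y
      simp only [hF]
      rw [← Nat.cast_sum, gigKernel_natCast_add _ _ _ _ hz, Finset.prod_mul_distrib,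
        Finset.prod_ite_eq' Finset.univ i (fun j => w (y j)), if_pos (Finset.mem_univ i),
        ← Finset.prod_pow_eq_pow_sum]
      simp only [mul_pow, mul_div_right_comm, Finset.prod_mul_distrib]
      ring
    · rw [Finset.prod_mul_distrib, Finset.prod_ite_eq' Finset.univ i (fun _ => m (lam i * z)),
        if_pos (Finset.mem_univ i), ← Real.exp_sum, gigKernel_add_left, ← Finset.sum_mul,
        Real.exp_neg]
      field_simp
  have hae : ∀ᵐ z ∂(volume.restrict (Set.Ioi (0 : ℝ))), z ∈ Set.Ioi (0 : ℝ) :=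
    ae_restrict_mem measurableSet_Ioi
  have key : HasSum (fun y => ∫ z in Set.Ioi (0 : ℝ), F y z)
      (∫ z in Set.Ioi (0 : ℝ), m (lam i * z) * gigKernel α φ φ z) := by
    -- The terms are nonnegative, so they dominate themselves.
    refine hasSum_integral_of_dominated_convergence F
      (fun y => ((measurable_gigKernel _ _ _).const_mul _).aestronglyMeasurable) (fun y => ?_) ?_ ?_ ?_
    · filter_upwards [hae] with z hz
      exact (Real.norm_of_nonneg (hF0 y z hz)).le
    · filter_upwards [hae] with z hz
      exact (hsum z hz).summable
    · refine Integrable.congr h_int ?_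
      filter_upwards [hae] with z hz
      exact (hsum z hz).tsum_eq.symm
    · filter_upwards [hae] with z hz
      exact hsum z hz
  convert! key.div_const (2 * besselK α φ) using 1
  ext y
  rw [mpgigPMF_eq_integral p lam hlam φ α hφ y]
  simp only [hF]
  rw [integral_const_mul]
  ring

/-- If `S` is the exponential generating function of `n ↦ w (n + 1)` at `x`, then `x * S` is that
of `n ↦ n * w n`; this steps from one Poisson moment to the next. -/
lemma hasSum_shift (w : ℕ → ℝ) (x S : ℝ)
    (h : HasSum (fun n : ℕ => w (n + 1) * (x ^ n / (n.factorial : ℝ))) S) :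
    HasSum (fun n : ℕ => (n * w n) * (x ^ n / (n.factorial : ℝ))) (x * S) := by
  rw [← hasSum_nat_add_iff' 1]
  convert! h.mul_left x using 1
  · ext n
    rw [Nat.factorial_succ]
    push_cast
    field_simp
    ring
  · simp

/-- the marginal second moment of an `MPGIG_p(λ,φ,α)` vector is finite and
`Var(Y_i) = λ_i R_α(φ) + λ_i² {R_{α,2}(φ) − R_α(φ)²}`, where `R_{α,k}(φ) = K_{k+α}(φ)/K_α(φ)`. -/
theorem mpgig_variance (p : ℕ) (hp : 1 ≤ p) (lam : Fin p → ℝ) (hlam : ∀ i, 0 < lam i)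
    (φ α : ℝ) (hφ : 0 < φ) (i : Fin p) :
    Summable (fun y : Fin p → ℕ => (y i : ℝ) ^ 2 * mpgigPMF p lam φ α y) ∧
    (∑' y : Fin p → ℕ, (y i : ℝ) ^ 2 * mpgigPMF p lam φ α y)
        - (∑' y : Fin p → ℕ, (y i : ℝ) * mpgigPMF p lam φ α y) ^ 2
      = lam i * (besselK (1 + α) φ / besselK α φ)
        + (lam i) ^ 2 *
          (besselK (2 + α) φ / besselK α φ - (besselK (1 + α) φ / besselK α φ) ^ 2) := by
  have hone : ∀ x : ℝ, HasSum (fun n : ℕ => x ^ n / (n.factorial : ℝ)) (Real.exp x) := fun x => by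
    rw [Real.exp_eq_exp_ℝ]; exact NormedSpace.expSeries_div_hasSum_exp x
  have hm1 : ∀ x : ℝ, HasSum (fun n : ℕ => (n : ℝ) * (x ^ n / (n.factorial : ℝ)))
      (x * Real.exp x) := fun x => by
    simpa using hasSum_shift (fun _ => 1) x _ (by simpa using hone x)
  have hm2 : ∀ x : ℝ, HasSum (fun n : ℕ => (n : ℝ) ^ 2 * (x ^ n / (n.factorial : ℝ)))
      ((x + x ^ 2) * Real.exp x) := fun x => by
    have h := hasSum_shift (fun n => (n : ℝ)) x _
      (by simpa [add_mul] using (hm1 x).add (hone x))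
    convert! h using 1
    · simp only [sq]
    · ring
  have hI1 := integrableOn_gigKernel (1 + α) hφ hφ
  have hI2 := integrableOn_gigKernel (2 + α) hφ hφ
  have he1 : ∀ z ∈ Set.Ioi (0 : ℝ), lam i * gigKernel (1 + α) φ φ z
      = lam i * z * gigKernel α φ φ z := fun z hz => by
    have h := gigKernel_natCast_add 1 α φ φ hz
    push_cast at h
    rw [h]; ring
  have he2 : ∀ z ∈ Set.Ioi (0 : ℝ),
      lam i * gigKernel (1 + α) φ φ z + lam i ^ 2 * gigKernel (2 + α) φ φ z
      = (lam i * z + (lam i * z) ^ 2) * gigKernel α φ φ z := fun z hz => by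
    have h := gigKernel_natCast_add 2 α φ φ hz
    push_cast at h
    rw [he1 z hz, h]; ring
  have h1 := hasSum_mpgigPMF p lam hlam φ α hφ i (fun n => (n : ℝ)) (fun n => by positivity)
    (fun x => x) hm1 (IntegrableOn.congr_fun (hI1.const_mul (lam i)) he1 measurableSet_Ioi)
  have h2 := hasSum_mpgigPMF p lam hlam φ α hφ i (fun n => (n : ℝ) ^ 2) (fun n => by positivity)
    (fun x => x + x ^ 2) hm2
    (IntegrableOn.congr_fun ((hI1.const_mul (lam i)).add (hI2.const_mul (lam i ^ 2))) he2
      measurableSet_Ioi)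
  rw [← setIntegral_congr_fun measurableSet_Ioi he1, integral_const_mul,
    integral_gigKernel_self] at h1
  rw [← setIntegral_congr_fun measurableSet_Ioi he2,
    integral_add (hI1.const_mul (lam i)) (hI2.const_mul (lam i ^ 2)), integral_const_mul,
    integral_const_mul, integral_gigKernel_self, integral_gigKernel_self] at h2
  refine ⟨h2.summable, ?_⟩
  rw [h1.tsum_eq, h2.tsum_eq]
  ring
end
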